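/- Let (T0, T̃0) be a joint pair of abstract Friedrichs operators on a complex Hilbert space H and let M ∈ L(W;W') satisfy (M)-boundary conditions. Then ker D = ker M = ker M* and ran D = ran M = ran M*. -/

import Mathlib

open scoped InnerProductSpace
open Filter Topology LinearPMap

noncomputable section

variable {H : Type*} [NormedAddCommGroup H] [InnerProductSpace ℂ H] [CompleteSpace H]

/-- The inner product used in the paper (antilinear in the **second** entry):
`pInner x y = ⟪y, x⟫` in Mathlib's convention. -/
def pInner {H : Type*} [NormedAddCommGroup H] [InnerProductSpace ℂ H] (x y : H) : ℂ :=
  ⟪y, x⟫_ℂ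

/-- A pair of densely defined operators with common domain satisfying conditions (T1) and (T2). -/
structure IsDualPairT12 (T0 T0t : H →ₗ.[ℂ] H) (lam : ℝ) : Prop where
  dom_eq : T0.domain = T0t.domain
  dense' : Dense (T0.domain : Set H)
  sym : ∀ (φ : T0.domain) (ψ : T0t.domain), pInner (T0 φ) (ψ : H) = pInner (φ : H) (T0t ψ)
  lam_pos : 0 < lam
  bound : ∀ (x : H) (hx : x ∈ T0.domain),
    ‖T0 ⟨x, hx⟩ + T0t ⟨x, dom_eq.le hx⟩‖ ≤ 2 * lam * ‖x‖

/-- A joint pair of abstract Friedrichs operators: (T1), (T2) and (T3). -/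
structure IsFriedrichsPair (T0 T0t : H →ₗ.[ℂ] H) (lam mu : ℝ)
    extends IsDualPairT12 T0 T0t lam : Prop where
  mu_pos : 0 < mu
  coercive : ∀ (x : H) (hx : x ∈ T0.domain),
    2 * mu * ‖x‖ ^ 2 ≤ (pInner (T0 ⟨x, hx⟩ + T0t ⟨x, dom_eq.le hx⟩) x).re

/-- The boundary form `[u|v] := ⟨T₁u , v⟩ − ⟨u , T̃₁v⟩` on the graph space
`W := dom T₁ = dom (T̃₀)*`.  The hypothesis `hW` expresses the fact `dom T₁ = dom T̃₁`. -/
def bform (T0 T0t : H →ₗ.[ℂ] H) (hW : T0t.adjoint.domain = T0.adjoint.domain)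
    (u v : T0t.adjoint.domain) : ℂ :=
  pInner (T0t.adjoint u) (v : H) - pInner (u : H) (T0.adjoint ⟨(v : H), hW.le v.2⟩)

/-- `X^[⊥]`, the `[·|·]`-orthogonal complement of `X ⊆ W` in the graph space. -/
def iorth (T0 T0t : H →ₗ.[ℂ] H) (hW : T0t.adjoint.domain = T0.adjoint.domain)
    (X : Set ↥T0t.adjoint.domain) : Set ↥T0t.adjoint.domain :=
  {u | ∀ v ∈ X, bform T0 T0t hW u v = 0}

/-- `W⁺ = {u ∈ W : [u|u] ≥ 0}`. -/
def Wplus (T0 T0t : H →ₗ.[ℂ] H) (hW : T0t.adjoint.domain = T0.adjoint.domain) :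
    Set ↥T0t.adjoint.domain :=
  {u | 0 ≤ (bform T0 T0t hW u u).re}

/-- `W⁻ = {u ∈ W : [u|u] ≤ 0}`. -/
def Wminus (T0 T0t : H →ₗ.[ℂ] H) (hW : T0t.adjoint.domain = T0.adjoint.domain) :
    Set ↥T0t.adjoint.domain :=
  {u | (bform T0 T0t hW u u).re ≤ 0}

/-- (V)-boundary conditions for a subset `V` of the graph space `W`. -/
def VBC (T0 T0t : H →ₗ.[ℂ] H) (hW : T0t.adjoint.domain = T0.adjoint.domain)
    (V : Set ↥T0t.adjoint.domain) : Prop :=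
  V ⊆ Wplus T0 T0t hW ∧ iorth T0 T0t hW V ⊆ Wminus T0 T0t hW ∧
    V = iorth T0 T0t hW (iorth T0 T0t hW V)

/-- The graph norm `‖u‖_{T₁} = ‖u‖ + ‖T₁ u‖` on the graph space. -/
def gnorm (T0t : H →ₗ.[ℂ] H) (u : T0t.adjoint.domain) : ℝ :=
  ‖(u : H)‖ + ‖T0t.adjoint u‖

/-- The distance associated with the graph norm. -/
def gdist (T0t : H →ₗ.[ℂ] H) (u v : T0t.adjoint.domain) : ℝ := gnorm T0t (u - v)

/-- Closedness (sequential) in the graph-norm topology of `W`. -/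
def GClosed (T0t : H →ₗ.[ℂ] H) (X : Set ↥T0t.adjoint.domain) : Prop :=
  ∀ f : ℕ → ↥T0t.adjoint.domain, (∀ n, f n ∈ X) →
    ∀ l, Tendsto (fun n => gdist T0t (f n) l) atTop (𝓝 0) → l ∈ X

/-- `W₀` (the domain of the closure of `T₀`), viewed as a subset of the graph space `W`. -/
def W0set (T0 T0t : H →ₗ.[ℂ] H) : Set ↥T0t.adjoint.domain :=
  {u | (u : H) ∈ T0.closure.domain}

/-- The graph inner product on `W` (in the paper's convention). -/
def gip (T0t : H →ₗ.[ℂ] H) (u v : ↥T0t.adjoint.domain) : ℂ :=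
  pInner (u : H) (v : H) + pInner (T0t.adjoint u) (T0t.adjoint v)

/-- The (Hilbert) orthogonal complement of `W₀` in the graph space. -/
def W0perp (T0 T0t : H →ₗ.[ℂ] H) : Set ↥T0t.adjoint.domain :=
  {u | ∀ v : ↥T0t.adjoint.domain, (v : H) ∈ T0.closure.domain → gip T0t u v = 0}

/-- `ker T₁` as a subset of the graph space. -/
def kerT1set (T0t : H →ₗ.[ℂ] H) : Set ↥T0t.adjoint.domain := {u | T0t.adjoint u = 0}

/-- `ker T̃₁` as a subset of the graph space. -/
def kerT1tset (T0 T0t : H →ₗ.[ℂ] H) (hW : T0t.adjoint.domain = T0.adjoint.domain) :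
    Set ↥T0t.adjoint.domain :=
  {u | T0.adjoint ⟨(u : H), hW.le u.2⟩ = 0}

/-- An operator `M ∈ L(W;W')`, encoded through the pairing `m u v = ⟨Mu, v⟩_{W',W}`
(linear in `u`, antilinear in `v`, and bounded with respect to the graph norm). -/
structure MOp (T0t : H →ₗ.[ℂ] H) where
  m : ↥T0t.adjoint.domain → ↥T0t.adjoint.domain → ℂ
  add_left : ∀ u v w, m (u + v) w = m u w + m v w
  smul_left : ∀ (c : ℂ) (u w), m (c • u) w = c * m u w
  add_right : ∀ u v w, m u (v + w) = m u v + m u w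
  smul_right : ∀ (c : ℂ) (u w), m u (c • w) = starRingEnd ℂ c * m u w
  bounded : ∃ C, ∀ u v, ‖m u v‖ ≤ C * (gnorm T0t u * gnorm T0t v)

/-- The (M)-boundary conditions for a pairing `m u v = ⟨Mu, v⟩_{W',W}`:
(M1) non-negativity and (M2) `W = ker (D − M) + ker (D + M)`. -/
def MBC (T0 T0t : H →ₗ.[ℂ] H) (hW : T0t.adjoint.domain = T0.adjoint.domain)
    (m : ↥T0t.adjoint.domain → ↥T0t.adjoint.domain → ℂ) : Prop :=
  (∀ u, 0 ≤ (m u u).re) ∧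
  (∀ w : ↥T0t.adjoint.domain, ∃ a b : ↥T0t.adjoint.domain,
    (∀ v, bform T0 T0t hW a v = m a v) ∧ (∀ v, bform T0 T0t hW b v + m b v = 0) ∧ w = a + b)

/-- `ker (D − M)` for a pairing `m`. -/
def kerDsubM (T0 T0t : H →ₗ.[ℂ] H) (hW : T0t.adjoint.domain = T0.adjoint.domain)
    (m : ↥T0t.adjoint.domain → ↥T0t.adjoint.domain → ℂ) : Set ↥T0t.adjoint.domain :=
  {u | ∀ v, bform T0 T0t hW u v = m u v}

/-- `ker (D + M)` for a pairing `m`. -/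
def kerDaddM (T0 T0t : H →ₗ.[ℂ] H) (hW : T0t.adjoint.domain = T0.adjoint.domain)
    (m : ↥T0t.adjoint.domain → ↥T0t.adjoint.domain → ℂ) : Set ↥T0t.adjoint.domain :=
  {u | ∀ v, bform T0 T0t hW u v + m u v = 0}

/-!
Since `M` agrees with `D` on `ker (D - M)` and with `-D` on `ker (D + M)`, one has
`D (a + b) = M (a - b)` for `a` and `b` in these kernels, so that `ran D = ran M`. The kernel of an
adjoint is the annihilator of the range, whence `ker D* = ker M*`. Moreover `D* = D`, because
`T₁ + T̃₁` is the restriction to `W` of the bounded self-adjoint extension of `T₀ + T̃₀`, and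
accretivity gives `ker M = ker M*` by a quadratic perturbation argument.

For `ran M*`, the functional `v ↦ ⟨M v, u⟩` is bounded in the graph norm and vanishes on
`dom T₀ ⊆ ker D = ker M`. Riesz representation in the graph of `T₁` then gives `w ∈ dom T₀*` with
`⟨M v, u⟩ = [v|w]`, that is `M* u = D w`. The splitting (M2) turns `M* u = D w` into `D u = M* w`,
which yields both inclusions between `ran M*` and `ran D`.
-/

section LinearMap

variable {R V N : Type*} [Ring R] [AddCommGroup V] [Module R V] [AddCommGroup N] [Module R N]
  {f g : V →ₗ[R] N}

theorem range_le_range_of_codisjoint_ker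
    (h : Codisjoint (LinearMap.ker (f - g)) (LinearMap.ker (f + g))) :
    LinearMap.range f ≤ LinearMap.range g := by
  rintro _ ⟨u, rfl⟩
  obtain ⟨a, b, ha, hb, rfl⟩ := Submodule.codisjoint_iff_exists_add_eq.1 h u
  refine ⟨a - b, ?_⟩
  rw [_root_.map_sub, _root_.map_add, sub_eq_zero.1 (LinearMap.mem_ker.1 ha),
    eq_neg_of_add_eq_zero_left (LinearMap.mem_ker.1 hb), sub_eq_add_neg]

theorem range_eq_range_of_codisjoint_ker
    (h : Codisjoint (LinearMap.ker (f - g)) (LinearMap.ker (f + g))) :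
    LinearMap.range f = LinearMap.range g := by
  refine (range_le_range_of_codisjoint_ker h).antisymm (range_le_range_of_codisjoint_ker ?_)
  rwa [← neg_sub f g, LinearMap.ker_neg, add_comm]

end LinearMap

section SesquilinearForm

variable {𝕜 V : Type*} [RCLike 𝕜] [AddCommGroup V] [Module 𝕜 V] {d m : V →ₗ[𝕜] V →ₗ⋆[𝕜] 𝕜}

/-- The adjoint `M*` of an operator from `V` to its antidual, the operator being encoded as the
sesquilinear form `m u v = ⟨Mu, v⟩`. -/
def formAdjoint (m : V →ₗ[𝕜] V →ₗ⋆[𝕜] 𝕜) : V →ₗ[𝕜] V →ₗ⋆[𝕜] 𝕜 :=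
  LinearMap.mk₂'ₛₗ (RingHom.id 𝕜) (starRingEnd 𝕜) (fun u v => starRingEnd 𝕜 (m v u))
    (by simp) (by simp) (by simp) (by simp)

@[simp]
theorem formAdjoint_apply (m : V →ₗ[𝕜] V →ₗ⋆[𝕜] 𝕜) (u v : V) :
    formAdjoint m u v = starRingEnd 𝕜 (m v u) :=
  rfl

@[simp]
theorem formAdjoint_formAdjoint (m : V →ₗ[𝕜] V →ₗ⋆[𝕜] 𝕜) : formAdjoint (formAdjoint m) = m := by
  ext u v
  simp

theorem mem_ker_formAdjoint_iff {u : V} :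
    u ∈ LinearMap.ker (formAdjoint m) ↔ ∀ f ∈ LinearMap.range m, f u = 0 := by
  constructor
  · rintro hu _ ⟨v, rfl⟩
    exact star_eq_zero.1 (LinearMap.congr_fun hu v)
  · intro h
    rw [LinearMap.mem_ker]
    ext v
    simp [h (m v) ⟨v, rfl⟩]

theorem ker_formAdjoint_eq_of_range_eq (h : LinearMap.range d = LinearMap.range m) :
    LinearMap.ker (formAdjoint d) = LinearMap.ker (formAdjoint m) := by
  ext u
  rw [mem_ker_formAdjoint_iff, mem_ker_formAdjoint_iff, h]

-- For `u ∈ ker m`, expanding `m (v + c u) (v + c u)` with `c = -t • m v u` shows that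
-- `re (m v v) - t * ‖m v u‖ ^ 2 ≥ 0` for every real `t`.
theorem ker_le_ker_formAdjoint (hm : ∀ u, 0 ≤ RCLike.re (m u u)) :
    LinearMap.ker m ≤ LinearMap.ker (formAdjoint m) := by
  intro u hu
  rw [LinearMap.mem_ker] at hu ⊢
  ext v
  rw [formAdjoint_apply, LinearMap.zero_apply, map_eq_zero]
  have bound (t : ℝ) : 0 ≤ RCLike.re (m v v) - t * ‖m v u‖ ^ 2 := by
    have expand : m (v + (-(t : 𝕜) * m v u) • u) (v + (-(t : 𝕜) * m v u) • u) =
        m v v - ((t * ‖m v u‖ ^ 2 : ℝ) : 𝕜) := by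
      rw [_root_.map_add m, _root_.map_smul, hu, smul_zero, add_zero, _root_.map_add,
        LinearMap.map_smulₛₗ, _root_.map_mul, _root_.map_neg, RCLike.conj_ofReal, smul_eq_mul]
      push_cast
      linear_combination -(t : 𝕜) * RCLike.conj_mul (m v u)
    have := hm (v + (-(t : 𝕜) * m v u) • u)
    rwa [expand, _root_.map_sub, RCLike.ofReal_re] at this
  by_contra hvu
  have hpos : 0 < ‖m v u‖ ^ 2 := by positivity
  have := bound ((RCLike.re (m v v) + 1) / ‖m v u‖ ^ 2)
  rw [div_mul_cancel₀ _ hpos.ne'] at this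
  linarith

theorem ker_eq_ker_formAdjoint (hm : ∀ u, 0 ≤ RCLike.re (m u u)) :
    LinearMap.ker m = LinearMap.ker (formAdjoint m) := by
  refine (ker_le_ker_formAdjoint hm).antisymm ?_
  simpa using ker_le_ker_formAdjoint (m := formAdjoint m) (by simpa using hm)

theorem formAdjoint_apply_eq_swap
    (h : Codisjoint (LinearMap.ker (d - m)) (LinearMap.ker (d + m))) {u w : V}
    (huw : formAdjoint m u = formAdjoint d w) : formAdjoint d u = formAdjoint m w := by
  have flip (v : V) : m v u = d v w := star_injective (LinearMap.congr_fun huw v)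
  ext v
  obtain ⟨a, b, ha, hb, rfl⟩ := Submodule.codisjoint_iff_exists_add_eq.1 h v
  have onA (x : V) : d a x = m a x := LinearMap.congr_fun (sub_eq_zero.1 ha) x
  have onB (x : V) : d b x = -m b x :=
    LinearMap.congr_fun (eq_neg_of_add_eq_zero_left hb) x
  simp only [formAdjoint_apply, _root_.map_add, onA, onB, flip, neg_neg]

theorem range_formAdjoint_eq
    (h : Codisjoint (LinearMap.ker (d - m)) (LinearMap.ker (d + m)))
    (hle : LinearMap.range (formAdjoint m) ≤ LinearMap.range (formAdjoint d)) :
    LinearMap.range (formAdjoint d) = LinearMap.range (formAdjoint m) := by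
  refine le_antisymm ?_ hle
  rintro _ ⟨u, rfl⟩
  obtain ⟨w, hw⟩ := hle ⟨u, rfl⟩
  exact ⟨w, (formAdjoint_apply_eq_swap h hw.symm).symm⟩

theorem setOf_forall_eq_zero_congr (h : LinearMap.ker d = LinearMap.ker m) :
    {u | ∀ v, d u v = 0} = {u | ∀ v, m u v = 0} := by
  ext u
  simpa [LinearMap.ext_iff] using SetLike.ext_iff.1 h u

theorem setOf_exists_eq_congr (h : LinearMap.range d = LinearMap.range m) :
    {f : V → 𝕜 | ∃ u, f = fun v => d u v} = {f | ∃ u, f = fun v => m u v} := by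
  have image (b : V →ₗ[𝕜] V →ₗ⋆[𝕜] 𝕜) :
      {f : V → 𝕜 | ∃ u, f = fun v => b u v} =
        DFunLike.coe '' (LinearMap.range b : Set (V →ₗ⋆[𝕜] 𝕜)) := by
    ext f
    simp [eq_comm]
  rw [image, image, h]

end SesquilinearForm

section Hilbert

variable {𝕜 E F : Type*} [RCLike 𝕜] [NormedAddCommGroup E] [InnerProductSpace 𝕜 E]
  [NormedAddCommGroup F] [InnerProductSpace 𝕜 F] [CompleteSpace E]

theorem exists_isSymmetric_extension {S : E →ₗ.[𝕜] E} (hd : Dense (S.domain : Set E))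
    (hS : S.IsFormalAdjoint S) {C : ℝ} (hC : ∀ x : S.domain, ‖S x‖ ≤ C * ‖(x : E)‖) :
    ∃ A : E →L[𝕜] E, (A : E →ₗ[𝕜] E).IsSymmetric ∧ ∀ x : S.domain, A x = S x := by
  have hrange : DenseRange S.domain.subtype := hd.denseRange_val
  let A : E →L[𝕜] E := S.toFun.extendOfNorm S.domain.subtype
  have hA (x : S.domain) : A x = S x := LinearMap.extendOfNorm_eq hrange ⟨C, hC⟩ x
  refine ⟨A, fun x y => ?_, hA⟩
  refine hd.denseRange_val.induction_on₂ (p := fun x y => ⟪A x, y⟫_𝕜 = ⟪x, A y⟫_𝕜)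
    (isClosed_eq (by fun_prop) (by fun_prop)) (fun x y => ?_) x y
  rw [hA, hA]
  exact hS x y

theorem exists_eq_inner_of_norm_le {V : Type*} [AddCommGroup V] [Module 𝕜 V] (j : V →ₗ[𝕜] E)
    (l : V →ₗ[𝕜] 𝕜) {C : ℝ} (hC : ∀ v, ‖l v‖ ≤ C * ‖j v‖) :
    ∃ r : E, ∀ v, l v = ⟪r, j v⟫_𝕜 := by
  obtain ⟨g, hg, -⟩ := exists_extension_norm_eq (LinearMap.range j) (l.compLeftInverse j)
  refine ⟨(InnerProductSpace.toDual 𝕜 E).symm g, fun v => ?_⟩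
  rw [InnerProductSpace.toDual_symm_apply]
  exact ((hg ⟨j v, v, rfl⟩).trans
    (LinearMap.compLeftInverse_apply_of_bdd _ _ ⟨C, hC⟩ v _ rfl)).symm

theorem exists_eq_inner_add_inner_of_graph_bound [CompleteSpace F] (A : E →ₗ.[𝕜] F)
    (l : A.domain →ₗ[𝕜] 𝕜) {C : ℝ} (hC : ∀ v, ‖l v‖ ≤ C * (‖(v : E)‖ + ‖A v‖)) :
    ∃ (p : E) (q : F), ∀ v : A.domain, l v = ⟪p, (v : E)⟫_𝕜 + ⟪q, A v⟫_𝕜 := by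
  let j : A.domain →ₗ[𝕜] WithLp 2 (E × F) :=
    (WithLp.linearEquiv 2 𝕜 (E × F)).symm.toLinearMap ∘ₗ A.domain.subtype.prod A.toFun
  have hj (v : A.domain) : ‖l v‖ ≤ |C| * 2 * ‖j v‖ := by
    have hfst : ‖(v : E)‖ ≤ ‖j v‖ := WithLp.norm_fst_le _ (j v)
    have hsnd : ‖A v‖ ≤ ‖j v‖ := WithLp.norm_snd_le _ (j v)
    calc ‖l v‖ ≤ C * (‖(v : E)‖ + ‖A v‖) := hC v
      _ ≤ |C| * (‖j v‖ + ‖j v‖) := by gcongr; exact le_abs_self C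
      _ = |C| * 2 * ‖j v‖ := by ring
  obtain ⟨r, hr⟩ := exists_eq_inner_of_norm_le j l hj
  exact ⟨r.fst, r.snd, fun v => (hr v).trans (WithLp.prod_inner_apply _ _)⟩

theorem exists_eq_inner_sub_inner_adjoint [CompleteSpace F] {S A : E →ₗ.[𝕜] F} (hSA : S ≤ A)
    (hd : Dense (S.domain : Set E)) (l : A.domain →ₗ[𝕜] 𝕜) {C : ℝ}
    (hC : ∀ v, ‖l v‖ ≤ C * (‖(v : E)‖ + ‖A v‖))
    (hl : ∀ v : A.domain, (v : E) ∈ S.domain → l v = 0) :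
    ∃ q : S†.domain, ∀ v : A.domain, l v = ⟪(q : F), A v⟫_𝕜 - ⟪S† q, (v : E)⟫_𝕜 := by
  obtain ⟨p, q, hpq⟩ := exists_eq_inner_add_inner_of_graph_bound A l hC
  have hadj (x : S.domain) : ⟪-p, (x : E)⟫_𝕜 = ⟪q, S x⟫_𝕜 := by
    have hx := hpq ⟨x, hSA.1 x.2⟩
    rw [hl _ x.2, ← hSA.2 (x := x) rfl] at hx
    rw [inner_neg_left]
    linear_combination hx
  have hq : q ∈ S†.domain := LinearPMap.mem_adjoint_domain_of_exists q ⟨-p, hadj⟩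
  refine ⟨⟨q, hq⟩, fun v => ?_⟩
  rw [LinearPMap.adjoint_apply_eq hd ⟨q, hq⟩ hadj, hpq, inner_neg_left]
  ring

end Hilbert

namespace IsDualPairT12

section

variable {H : Type*} [NormedAddCommGroup H] [InnerProductSpace ℂ H] {T0 T0t : H →ₗ.[ℂ] H} {lam : ℝ}

theorem dense_domain_right (hD : IsDualPairT12 T0 T0t lam) : Dense (T0t.domain : Set H) :=
  hD.dom_eq ▸ hD.dense'

theorem isFormalAdjoint (hD : IsDualPairT12 T0 T0t lam) : T0t.IsFormalAdjoint T0 :=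
  fun ψ φ => (hD.sym φ ψ).symm

end

variable {T0 T0t : H →ₗ.[ℂ] H} {lam : ℝ}

theorem le_adjoint (hD : IsDualPairT12 T0 T0t lam) : T0 ≤ T0t† :=
  hD.isFormalAdjoint.le_adjoint hD.dense_domain_right

theorem exists_isSymmetric_extension_add (hD : IsDualPairT12 T0 T0t lam) :
    ∃ A : H →L[ℂ] H, (A : H →ₗ[ℂ] H).IsSymmetric ∧ ∀ x : (T0 + T0t).domain, A x = (T0 + T0t) x := by
  have hd : Dense ((T0 + T0t).domain : Set H) := by
    rw [LinearPMap.add_domain, ← hD.dom_eq, inf_idem]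
    exact hD.dense'
  have hsymm : (T0 + T0t).IsFormalAdjoint (T0 + T0t) := fun x y => by
    simp only [LinearPMap.add_apply, inner_add_left, inner_add_right]
    have h₁ := hD.isFormalAdjoint ⟨x, x.2.2⟩ ⟨y, y.2.1⟩
    have h₂ := hD.isFormalAdjoint.symm ⟨x, x.2.1⟩ ⟨y, y.2.2⟩
    rw [h₁, h₂, add_comm]
  exact exists_isSymmetric_extension hd hsymm fun x => hD.bound x x.2.1

theorem adjoint_add_adjoint_eq_of_extension (hD : IsDualPairT12 T0 T0t lam) {A : H →L[ℂ] H}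
    (hA : (A : H →ₗ[ℂ] H).IsSymmetric) (hext : ∀ x : (T0 + T0t).domain, A x = (T0 + T0t) x)
    (u : T0t†.domain) (u' : T0†.domain) (h : (u : H) = u') : T0t† u + T0† u' = A u := by
  refine hD.dense'.eq_of_inner_left ℂ fun x hx => ?_
  have hxt : x ∈ T0t.domain := hD.dom_eq.le hx
  calc ⟪T0t† u + T0† u', x⟫_ℂ = ⟪(u : H), T0t ⟨x, hxt⟩⟫_ℂ + ⟪(u' : H), T0 ⟨x, hx⟩⟫_ℂ := by
        rw [inner_add_left,
          LinearPMap.adjoint_isFormalAdjoint hD.dense_domain_right u ⟨x, hxt⟩,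
          LinearPMap.adjoint_isFormalAdjoint hD.dense' u' ⟨x, hx⟩]
    _ = ⟪(u : H), A x⟫_ℂ := by
        rw [hext ⟨x, hx, hxt⟩, LinearPMap.add_apply, inner_add_right, h, add_comm]
    _ = ⟪A u, x⟫_ℂ := (hA u x).symm

end IsDualPairT12

section BoundaryOperator

variable {T0 T0t : H →ₗ.[ℂ] H} {lam : ℝ}

/-- The boundary operator `D : W → W'`, encoded as the sesquilinear form `⟨Du, v⟩ = [u|v]`. -/
def boundaryOperator (T0 T0t : H →ₗ.[ℂ] H) (hW : T0t†.domain = T0†.domain) :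
    T0t†.domain →ₗ[ℂ] T0t†.domain →ₗ⋆[ℂ] ℂ :=
  have add_mk (v w : T0t†.domain) : T0† ⟨(v + w : H), hW.le (v + w).2⟩ =
      T0† ⟨v, hW.le v.2⟩ + T0† ⟨w, hW.le w.2⟩ := T0†.map_add ⟨v, _⟩ ⟨w, _⟩
  have smul_mk (c : ℂ) (v : T0t†.domain) : T0† ⟨(c • v : H), hW.le (c • v).2⟩ =
      c • T0† ⟨v, hW.le v.2⟩ := T0†.map_smul c ⟨v, _⟩
  LinearMap.mk₂'ₛₗ (RingHom.id ℂ) (starRingEnd ℂ) (bform T0 T0t hW)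
    (fun u v w => by
      simp only [bform, pInner, LinearPMap.map_add, Submodule.coe_add, inner_add_right]
      ring)
    (fun c u w => by
      simp only [bform, pInner, LinearPMap.map_smul, Submodule.coe_smul, inner_smul_right,
        RingHom.id_apply, smul_eq_mul]
      ring)
    (fun u v w => by
      simp only [bform, pInner, Submodule.coe_add, add_mk, inner_add_left]
      ring)
    (fun c u w => by
      simp only [bform, pInner, Submodule.coe_smul, smul_mk, inner_smul_left, smul_eq_mul]
      ring)

theorem boundaryOperator_apply (hW : T0t†.domain = T0†.domain) (u v : T0t†.domain) :
    boundaryOperator T0 T0t hW u v = bform T0 T0t hW u v :=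
  rfl

theorem formAdjoint_boundaryOperator (hD : IsDualPairT12 T0 T0t lam)
    (hW : T0t†.domain = T0†.domain) :
    formAdjoint (boundaryOperator T0 T0t hW) = boundaryOperator T0 T0t hW := by
  obtain ⟨A, hA, hext⟩ := hD.exists_isSymmetric_extension_add
  have sum_eq (w : T0t†.domain) : T0t† w + T0† ⟨w, hW.le w.2⟩ = A w :=
    hD.adjoint_add_adjoint_eq_of_extension hA hext w _ rfl
  ext u v
  have hsymm : ⟪A v, (u : H)⟫_ℂ = ⟪(v : H), A u⟫_ℂ := hA v u
  rw [← sum_eq, ← sum_eq, inner_add_left, inner_add_right] at hsymm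
  simp only [formAdjoint_apply, boundaryOperator_apply, bform, pInner, _root_.map_sub,
    inner_conj_symm]
  linear_combination hsymm

theorem mem_ker_boundaryOperator (hD : IsDualPairT12 T0 T0t lam) (hW : T0t†.domain = T0†.domain)
    {u : T0t†.domain} (hu : (u : H) ∈ T0.domain) :
    u ∈ LinearMap.ker (boundaryOperator T0 T0t hW) := by
  rw [LinearMap.mem_ker]
  ext v
  have hadj := LinearPMap.adjoint_isFormalAdjoint hD.dense' ⟨v, hW.le v.2⟩ ⟨u, hu⟩
  rw [boundaryOperator_apply, LinearMap.zero_apply, bform, pInner, pInner, hadj,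
    hD.le_adjoint.2 (x := ⟨u, hu⟩) (y := u) rfl, sub_self]

theorem exists_boundaryOperator_eq (hD : IsDualPairT12 T0 T0t lam) (hW : T0t†.domain = T0†.domain)
    (l : T0t†.domain →ₗ[ℂ] ℂ) {C : ℝ} (hC : ∀ v, ‖l v‖ ≤ C * gnorm T0t v)
    (hl : ∀ v : T0t†.domain, (v : H) ∈ T0.domain → l v = 0) :
    ∃ w, ∀ v, l v = boundaryOperator T0 T0t hW v w := by
  obtain ⟨q, hq⟩ := exists_eq_inner_sub_inner_adjoint hD.le_adjoint hD.dense' l hC hl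
  exact ⟨⟨q, hW.ge q.2⟩, hq⟩

/-- The operator `M : W → W'` as a bundled sesquilinear form. -/
def MOp.toLinearMap (M : MOp T0t) : T0t†.domain →ₗ[ℂ] T0t†.domain →ₗ⋆[ℂ] ℂ :=
  LinearMap.mk₂'ₛₗ (RingHom.id ℂ) (starRingEnd ℂ) M.m M.add_left M.smul_left M.add_right
    M.smul_right

theorem MBC.codisjoint_ker {hW : T0t†.domain = T0†.domain} {M : MOp T0t}
    (hM : MBC T0 T0t hW M.m) :
    Codisjoint (LinearMap.ker (boundaryOperator T0 T0t hW - M.toLinearMap))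
      (LinearMap.ker (boundaryOperator T0 T0t hW + M.toLinearMap)) := by
  refine Submodule.codisjoint_iff_exists_add_eq.2 fun w => ?_
  obtain ⟨a, b, ha, hb, rfl⟩ := hM.2 w
  exact ⟨a, b, sub_eq_zero.2 (LinearMap.ext ha), LinearMap.ext hb, rfl⟩

theorem MOp.range_formAdjoint_le (hD : IsDualPairT12 T0 T0t lam) (hW : T0t†.domain = T0†.domain)
    (M : MOp T0t)
    (hker : LinearMap.ker (boundaryOperator T0 T0t hW) ≤ LinearMap.ker M.toLinearMap) :
    LinearMap.range (formAdjoint M.toLinearMap) ≤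
      LinearMap.range (formAdjoint (boundaryOperator T0 T0t hW)) := by
  rintro _ ⟨u, rfl⟩
  obtain ⟨C, hC⟩ := M.bounded
  have bound (v : T0t†.domain) : ‖M.toLinearMap.flip u v‖ ≤ C * gnorm T0t u * gnorm T0t v :=
    (hC v u).trans_eq (by ring)
  have vanish (v : T0t†.domain) (hv : (v : H) ∈ T0.domain) : M.toLinearMap.flip u v = 0 :=
    LinearMap.congr_fun (hker (mem_ker_boundaryOperator hD hW hv)) u
  obtain ⟨w, hw⟩ := exists_boundaryOperator_eq hD hW _ bound vanish
  exact ⟨w, LinearMap.ext fun v => congrArg (starRingEnd ℂ) (hw v).symm⟩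

end BoundaryOperator

theorem ker_ran_D_eq_ker_ran_M_general
    (T0 T0t : H →ₗ.[ℂ] H) (lam : ℝ) (hD : IsDualPairT12 T0 T0t lam)
    (hW : T0t.adjoint.domain = T0.adjoint.domain)
    (M : MOp T0t) (hM : MBC T0 T0t hW M.m) :
    ({u : ↥T0t.adjoint.domain | ∀ v, bform T0 T0t hW u v = 0} =
        {u | ∀ v, M.m u v = 0} ∧
      {u : ↥T0t.adjoint.domain | ∀ v, M.m u v = 0} =
        {u | ∀ v, starRingEnd ℂ (M.m v u) = 0}) ∧
    ({f : ↥T0t.adjoint.domain → ℂ | ∃ u, f = fun v => bform T0 T0t hW u v} =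
        {f | ∃ u, f = fun v => M.m u v} ∧
      {f : ↥T0t.adjoint.domain → ℂ | ∃ u, f = fun v => M.m u v} =
        {f | ∃ u, f = fun v => starRingEnd ℂ (M.m v u)}) := by
  let D := boundaryOperator T0 T0t hW
  let m := M.toLinearMap
  have hDstar : formAdjoint D = D := formAdjoint_boundaryOperator hD hW
  have hcodisj : Codisjoint (LinearMap.ker (D - m)) (LinearMap.ker (D + m)) := hM.codisjoint_ker
  have ran_M : LinearMap.range D = LinearMap.range m := range_eq_range_of_codisjoint_ker hcodisj
  have ker_Mstar : LinearMap.ker m = LinearMap.ker (formAdjoint m) := ker_eq_ker_formAdjoint hM.1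
  have ker_M : LinearMap.ker D = LinearMap.ker m := by
    rw [ker_Mstar, ← ker_formAdjoint_eq_of_range_eq ran_M, hDstar]
  have ran_Mstar : LinearMap.range D = LinearMap.range (formAdjoint m) := by
    simpa only [hDstar] using
      range_formAdjoint_eq hcodisj (MOp.range_formAdjoint_le hD hW M ker_M.le)
  exact ⟨⟨setOf_forall_eq_zero_congr ker_M, setOf_forall_eq_zero_congr ker_Mstar⟩,
    setOf_exists_eq_congr ran_M, setOf_exists_eq_congr (ran_M.symm.trans ran_Mstar)⟩

/-- Lemma 2.5: if `M` satisfies the (M)-boundary conditions, then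
`ker D = ker M = ker M*` and `ran D = ran M = ran M*`. -/
theorem ker_ran_D_eq_ker_ran_M
    (T0 T0t : H →ₗ.[ℂ] H) (lam mu : ℝ) (hF : IsFriedrichsPair T0 T0t lam mu)
    (hW : T0t.adjoint.domain = T0.adjoint.domain)
    (M : MOp T0t) (hM : MBC T0 T0t hW M.m) :
    ({u : ↥T0t.adjoint.domain | ∀ v, bform T0 T0t hW u v = 0} =
        {u | ∀ v, M.m u v = 0} ∧
      {u : ↥T0t.adjoint.domain | ∀ v, M.m u v = 0} =
        {u | ∀ v, starRingEnd ℂ (M.m v u) = 0}) ∧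
    ({f : ↥T0t.adjoint.domain → ℂ | ∃ u, f = fun v => bform T0 T0t hW u v} =
        {f | ∃ u, f = fun v => M.m u v} ∧
      {f : ↥T0t.adjoint.domain → ℂ | ∃ u, f = fun v => M.m u v} =
        {f | ∃ u, f = fun v => starRingEnd ℂ (M.m v u)}) :=
  ker_ran_D_eq_ker_ran_M_general T0 T0t lam hF.toIsDualPairT12 hW M hM
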